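/- arXiv:1905.04202 — 2 statements merged into one kernel-verified Lean document; each statement's English description precedes it below -/
import Mathlib

section
/- There is no monic polynomial of degree 8 with zero x^7 coefficient and zero constant term that is a permutation polynomial over F_37. -/
/-!
If a normalized polynomial `f` of degree `8` permutes `𝔽₃₇`, then the coefficient of `x³⁶` in `fᵗ`
vanishes for `t < 9` (Hermite). Write `a`, `b`, `c`, `d`, `e` for the coefficients of `x⁶`, `x⁵`,
`x³`, `x²`, `x` in `f`. Then `t = 5` gives `-2a²` for the coefficient of `x⁴`, and `t = 6` gives a
relation that is linear in `e`. Passing from `f(x)` to `s⁸f(x/s)` multiplies `a` by `s²` and `b` by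
`s³`, which leaves 42 pairs `(a, b)`. For each of them, every choice of `c` and `d`, and every `e`
allowed by the relation, a computation finds a repeated value of `f`.
-/

open Polynomial

section PowerSums

variable {K : Type*} [Field K] [Fintype K]

theorem sum_pow_card_sub_one : ∑ x : K, x ^ (Fintype.card K - 1) = -1 := by
  classical
  have hq : Fintype.card K - 1 ≠ 0 := Nat.sub_ne_zero_of_lt Fintype.one_lt_card
  have hpow (x : K) : x ^ (Fintype.card K - 1) = if x ≠ 0 then 1 else 0 := by
    split_ifs with hx
    · exact FiniteField.pow_card_sub_one_eq_one x hx
    · rw [not_not.mp hx, zero_pow hq]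
  simp_rw [hpow, Finset.sum_boole, Finset.filter_ne', Finset.card_erase_of_mem (Finset.mem_univ _),
    Finset.card_univ, Nat.cast_sub Fintype.card_pos, FiniteField.cast_card_eq_zero, Nat.cast_one,
    zero_sub]

theorem sum_pow_of_lt_two_mul_card_sub_one {i : ℕ} (hi : i < 2 * (Fintype.card K - 1)) :
    ∑ x : K, x ^ i = if i = Fintype.card K - 1 then -1 else 0 := by
  split_ifs with hiq
  · rw [hiq, sum_pow_card_sub_one]
  obtain hlt | hgt := lt_or_gt_of_ne hiq
  · exact FiniteField.sum_pow_lt_card_sub_one K i hlt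
  · have hpow (x : K) : x ^ i = x ^ (i - (Fintype.card K - 1)) := by
      obtain rfl | hx := eq_or_ne x 0
      · rw [zero_pow (by omega), zero_pow (by omega)]
      · rw [pow_sub₀ x hx hgt.le, FiniteField.pow_card_sub_one_eq_one x hx, inv_one, mul_one]
    simp_rw [hpow]
    exact FiniteField.sum_pow_lt_card_sub_one K _ (by omega)

theorem sum_eval_eq_neg_coeff_card_sub_one {p : K[X]}
    (hp : p.natDegree < 2 * (Fintype.card K - 1)) :
    ∑ x, p.eval x = -p.coeff (Fintype.card K - 1) := by
  calc
    ∑ x, p.eval x = ∑ i ∈ Finset.range (2 * (Fintype.card K - 1)), p.coeff i * ∑ x : K, x ^ i := by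
      simp_rw [eval_eq_sum_range' hp, Finset.mul_sum]
      exact Finset.sum_comm
    _ = ∑ i ∈ Finset.range (2 * (Fintype.card K - 1)),
        if i = Fintype.card K - 1 then -p.coeff i else 0 := by
      refine Finset.sum_congr rfl fun i hi ↦ ?_
      rw [sum_pow_of_lt_two_mul_card_sub_one (Finset.mem_range.mp hi), mul_ite, mul_neg_one,
        mul_zero]
    _ = -p.coeff (Fintype.card K - 1) := by
      rw [Finset.sum_ite_eq', if_pos (Finset.mem_range.mpr (by omega))]

theorem coeff_pow_card_sub_one_eq_zero_of_bijective {f : K[X]}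
    (hf : Function.Bijective fun x ↦ f.eval x) {t : ℕ} (ht : t < Fintype.card K - 1)
    (hdeg : t * f.natDegree < 2 * (Fintype.card K - 1)) :
    (f ^ t).coeff (Fintype.card K - 1) = 0 := by
  have hsum := sum_eval_eq_neg_coeff_card_sub_one (natDegree_pow_le.trans_lt hdeg)
  simp_rw [eval_pow] at hsum
  rw [hf.sum_comp (· ^ t), FiniteField.sum_pow_lt_card_sub_one K t ht] at hsum
  exact neg_eq_zero.mp hsum.symm

end PowerSums

section Semiring

variable {R : Type*} [Semiring R]

theorem reflect_pow {f : R[X]} {n : ℕ} (hf : f.natDegree ≤ n) (t : ℕ) :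
    (f ^ t).reflect (t * n) = f.reflect n ^ t := by
  induction t with
  | zero => simp
  | succ t ih =>
    rw [pow_succ, pow_succ, Nat.succ_mul, reflect_mul _ _ (natDegree_pow_le_of_le t hf) hf, ih]

theorem eq_one_add_X_sq_mul_divX_divX {p : R[X]} (h0 : p.coeff 0 = 1) (h1 : p.coeff 1 = 0) :
    p = 1 + X ^ 2 * p.divX.divX := by
  ext (_ | _ | n)
  · simp [h0, mul_coeff_zero]
  · simp [h1, coeff_X_pow_mul', coeff_one]
  · simp [coeff_X_pow_mul', coeff_one]

theorem coeff_mul_eq_sum_range (u v : R[X]) (n : ℕ) :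
    (u * v).coeff n = ∑ i ∈ Finset.range (n + 1), u.coeff i * v.coeff (n - i) := by
  rw [coeff_mul, Finset.Nat.sum_antidiagonal_eq_sum_range_succ fun i j ↦ u.coeff i * v.coeff j]

end Semiring

section CommSemiring

variable {R : Type*} [CommSemiring R]

theorem coeff_one_add_X_pow_mul_pow (g : R[X]) (m t n : ℕ) :
    ((1 + X ^ m * g) ^ t).coeff n =
      ∑ k ∈ Finset.range (t + 1),
        if k * m ≤ n then t.choose k * (g ^ k).coeff (n - k * m) else 0 := by
  simp_rw [add_comm (1 : R[X]), add_pow, finsetSum_coeff]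
  refine Finset.sum_congr rfl fun k _ ↦ ?_
  rw [one_pow, mul_one, mul_pow, ← pow_mul', coeff_mul_natCast, coeff_X_pow_mul', ite_mul, zero_mul,
    mul_comm (coeff _ _)]

theorem coeff_four_one_add_X_sq_mul_pow_five (g : R[X]) :
    ((1 + X ^ 2 * g) ^ 5).coeff 4 = 5 * g.coeff 2 + 10 * g.coeff 0 ^ 2 := by
  simp [coeff_one_add_X_pow_mul_pow, Finset.sum_range_succ, Nat.choose, coeff_one,
    coeff_zero_eq_eval_zero]

theorem coeff_eight_pow_two {g : R[X]} (hg : g.natDegree ≤ 5) :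
    (g ^ 2).coeff 8 = 2 * g.coeff 3 * g.coeff 5 + g.coeff 4 ^ 2 := by
  have hzero {i : ℕ} (hi : 5 < i) : g.coeff i = 0 := coeff_eq_zero_of_natDegree_lt (hg.trans_lt hi)
  rw [pow_two, coeff_mul_eq_sum_range]
  simp only [Finset.sum_range_succ, Finset.sum_range_zero, Nat.reduceSub,
    hzero (i := 6) (by norm_num), hzero (i := 7) (by norm_num), hzero (i := 8) (by norm_num)]
  ring

theorem coeff_six_pow_three {g : R[X]} (hg : g.natDegree ≤ 5) :
    (g ^ 3).coeff 6 =
      6 * g.coeff 0 * g.coeff 1 * g.coeff 5 + 6 * g.coeff 0 * g.coeff 2 * g.coeff 4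
        + 3 * g.coeff 0 * g.coeff 3 ^ 2 + 3 * g.coeff 1 ^ 2 * g.coeff 4
        + 6 * g.coeff 1 * g.coeff 2 * g.coeff 3 + g.coeff 2 ^ 3 := by
  have hsix : g.coeff 6 = 0 := coeff_eq_zero_of_natDegree_lt (hg.trans_lt (by norm_num))
  rw [pow_succ, pow_two]
  simp only [coeff_mul_eq_sum_range, Finset.sum_range_succ, Finset.sum_range_zero, Nat.reduceAdd,
    Nat.reduceSub, hsix]
  ring

theorem coeff_four_pow_four (g : R[X]) :
    (g ^ 4).coeff 4 =
      4 * g.coeff 0 ^ 3 * g.coeff 4 + 12 * g.coeff 0 ^ 2 * g.coeff 1 * g.coeff 3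
        + 6 * g.coeff 0 ^ 2 * g.coeff 2 ^ 2 + 12 * g.coeff 0 * g.coeff 1 ^ 2 * g.coeff 2
        + g.coeff 1 ^ 4 := by
  rw [show g ^ 4 = g * g * (g * g) by ring]
  simp only [coeff_mul_eq_sum_range, Finset.sum_range_succ, Finset.sum_range_zero, Nat.reduceAdd,
    Nat.reduceSub]
  ring

theorem coeff_two_pow_five (g : R[X]) :
    (g ^ 5).coeff 2 =
      5 * g.coeff 0 ^ 4 * g.coeff 2 + 10 * g.coeff 0 ^ 3 * g.coeff 1 ^ 2 := by
  rw [show g ^ 5 = g * g * (g * g) * g by ring]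
  simp only [coeff_mul_eq_sum_range, Finset.sum_range_succ, Finset.sum_range_zero, Nat.reduceAdd,
    Nat.reduceSub]
  ring

theorem coeff_twelve_one_add_X_sq_mul_pow_six {g : R[X]} (hg : g.natDegree ≤ 5) :
    ((1 + X ^ 2 * g) ^ 6).coeff 12 =
      15 * (2 * g.coeff 3 * g.coeff 5 + g.coeff 4 ^ 2)
      + 20 * (6 * g.coeff 0 * g.coeff 1 * g.coeff 5 + 6 * g.coeff 0 * g.coeff 2 * g.coeff 4
        + 3 * g.coeff 0 * g.coeff 3 ^ 2 + 3 * g.coeff 1 ^ 2 * g.coeff 4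
        + 6 * g.coeff 1 * g.coeff 2 * g.coeff 3 + g.coeff 2 ^ 3)
      + 15 * (4 * g.coeff 0 ^ 3 * g.coeff 4 + 12 * g.coeff 0 ^ 2 * g.coeff 1 * g.coeff 3
        + 6 * g.coeff 0 ^ 2 * g.coeff 2 ^ 2 + 12 * g.coeff 0 * g.coeff 1 ^ 2 * g.coeff 2
        + g.coeff 1 ^ 4)
      + 6 * (5 * g.coeff 0 ^ 4 * g.coeff 2 + 10 * g.coeff 0 ^ 3 * g.coeff 1 ^ 2)
      + g.coeff 0 ^ 6 := by
  have hten : g.coeff 10 = 0 := coeff_eq_zero_of_natDegree_lt (hg.trans_lt (by norm_num))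
  simp only [coeff_one_add_X_pow_mul_pow, Finset.sum_range_succ, Finset.sum_range_zero,
    Nat.reduceMul, Nat.reduceSub, Nat.reduceLeDiff, if_true, Nat.choose, coeff_eight_pow_two hg,
    coeff_six_pow_three hg, coeff_four_pow_four, coeff_two_pow_five, pow_zero, pow_one, hten,
    coeff_one]
  simp [coeff_zero_eq_eval_zero]

end CommSemiring

/-- The normalized polynomials of degree `8`: monic, without `X ^ 7` term and without constant
term. -/
structure IsNormalizedOctic {R : Type*} [Semiring R] (f : R[X]) : Prop where
  monic : f.Monic
  natDegree_eq : f.natDegree = 8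
  coeff_seven : f.coeff 7 = 0
  coeff_zero : f.coeff 0 = 0

namespace IsNormalizedOctic

section Semiring

variable {R : Type*} [Semiring R] {f : R[X]}

theorem coeff_eight (hf : IsNormalizedOctic f) : f.coeff 8 = 1 := by
  rw [← hf.natDegree_eq]
  exact hf.monic.coeff_natDegree

theorem eval_eq (hf : IsNormalizedOctic f) (x : R) :
    f.eval x = f.coeff 1 * x + f.coeff 2 * x ^ 2 + f.coeff 3 * x ^ 3 + f.coeff 4 * x ^ 4
      + f.coeff 5 * x ^ 5 + f.coeff 6 * x ^ 6 + x ^ 8 := by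
  rw [eval_eq_sum_range, hf.natDegree_eq]
  simp only [Finset.sum_range_succ, Finset.sum_range_zero, hf.coeff_zero, hf.coeff_seven,
    hf.coeff_eight, zero_mul, one_mul, zero_add, add_zero, pow_one]

/-- The polynomial `g` with `1 + X ^ 2 * g` the reverse of the normalized octic `f`; the first
coefficients of powers of `1 + X ^ 2 * g` are the top coefficients of powers of `f`. -/
noncomputable def tail (f : R[X]) : R[X] :=
  (f.reflect 8).divX.divX

theorem coeff_tail (f : R[X]) {i : ℕ} (hi : i ≤ 6) : (tail f).coeff i = f.coeff (6 - i) := by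
  rw [tail, coeff_divX, coeff_divX, coeff_reflect, revAt_le (by omega)]
  congr 1
  omega

theorem natDegree_tail_le (hf : IsNormalizedOctic f) : (tail f).natDegree ≤ 5 := by
  rw [natDegree_le_iff_coeff_eq_zero]
  intro i hi
  obtain rfl | hi := (Nat.succ_le_of_lt hi).eq_or_lt
  · rw [coeff_tail f (by rfl), hf.coeff_zero]
  · rw [tail, coeff_divX, coeff_divX, coeff_reflect, revAt_eq_self_of_lt (by omega)]
    exact coeff_eq_zero_of_natDegree_lt (by rw [hf.natDegree_eq]; omega)

theorem reflect_eq (hf : IsNormalizedOctic f) : f.reflect 8 = 1 + X ^ 2 * tail f :=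
  eq_one_add_X_sq_mul_divX_divX (by simp [coeff_reflect, hf.coeff_eight])
    (by simp [coeff_reflect, revAt_le, hf.coeff_seven])

theorem coeff_pow (hf : IsNormalizedOctic f) {t n : ℕ} (hn : n ≤ t * 8) :
    (f ^ t).coeff (t * 8 - n) = ((1 + X ^ 2 * tail f) ^ t).coeff n := by
  rw [← hf.reflect_eq, ← reflect_pow hf.natDegree_eq.le, coeff_reflect, revAt_le hn]

end Semiring

section CommSemiring

variable {R : Type*} [CommSemiring R] {f : R[X]}

theorem scaleRoots (hf : IsNormalizedOctic f) (s : R) : IsNormalizedOctic (f.scaleRoots s) where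
  monic := (monic_scaleRoots_iff s).mpr hf.monic
  natDegree_eq := (natDegree_scaleRoots f s).trans hf.natDegree_eq
  coeff_seven := by rw [coeff_scaleRoots, hf.coeff_seven, zero_mul]
  coeff_zero := by rw [coeff_scaleRoots, hf.coeff_zero, zero_mul]

end CommSemiring

end IsNormalizedOctic

theorem bijective_eval_scaleRoots {R : Type*} [CommSemiring R] {f : R[X]}
    (hf : Function.Bijective fun x ↦ f.eval x) (s : Rˣ) :
    Function.Bijective fun x ↦ (f.scaleRoots (s : R)).eval x := by
  have heval : (fun x ↦ (f.scaleRoots (s : R)).eval x) =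
      (((s ^ f.natDegree : Rˣ) : R) * ·) ∘ (fun x ↦ f.eval x) ∘ (((s⁻¹ : Rˣ) : R) * ·) := by
    funext x
    have := scaleRoots_eval_mul f ((s⁻¹ : Rˣ) * x) (s : R)
    rwa [Units.mul_inv_cancel_left, ← Units.val_pow_eq_pow_val] at this
  rw [heval]
  exact (s ^ f.natDegree).mulLeft_bijective.comp (hf.comp s⁻¹.mulLeft_bijective)

section ZMod37

local instance : Fact (Nat.Prime 37) := ⟨by norm_num⟩

namespace IsNormalizedOctic

variable {f : (ZMod 37)[X]}

theorem coeff_pow_eq_zero (hf : IsNormalizedOctic f) (hbij : Function.Bijective fun x ↦ f.eval x)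
    {t : ℕ} (ht : t < 9) : (f ^ t).coeff 36 = 0 := by
  have h := coeff_pow_card_sub_one_eq_zero_of_bijective hbij (t := t)
  rw [ZMod.card, hf.natDegree_eq] at h
  exact h (by omega) (by omega)

theorem coeff_four_eq (hf : IsNormalizedOctic f) (hbij : Function.Bijective fun x ↦ f.eval x) :
    f.coeff 4 = -2 * f.coeff 6 ^ 2 := by
  have h := hf.coeff_pow_eq_zero hbij (t := 5) (by norm_num)
  rw [hf.coeff_pow (t := 5) (n := 4) (by norm_num), coeff_four_one_add_X_sq_mul_pow_five,
    coeff_tail f (by norm_num), coeff_tail f (by norm_num)] at h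
  have h37 : (37 : ZMod 37) = 0 := by decide
  linear_combination 15 * h - (2 * f.coeff 4 + 4 * f.coeff 6 ^ 2) * h37

theorem coeff_relation (hf : IsNormalizedOctic f) (hbij : Function.Bijective fun x ↦ f.eval x)
    {a b c d e : ZMod 37} (ha : f.coeff 6 = a) (hb : f.coeff 5 = b) (hc : f.coeff 3 = c)
    (hd : f.coeff 2 = d) (he : f.coeff 1 = e) :
    2 * (c + 4 * a * b) * e + (d ^ 2 + 4 * (b ^ 2 - 3 * a ^ 3) * d + b ^ 4 + 4 * a * c ^ 2
      - 4 * a ^ 2 * b * c - 20 * a ^ 3 * b ^ 2 + 2 * a ^ 6) = 0 := by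
  have h := hf.coeff_pow_eq_zero hbij (t := 6) (by norm_num)
  rw [hf.coeff_pow (t := 6) (n := 12) (by norm_num),
    coeff_twelve_one_add_X_sq_mul_pow_six hf.natDegree_tail_le] at h
  simp only [coeff_tail f, Nat.reduceLeDiff, Nat.reduceSub, hf.coeff_four_eq hbij, ha, hb, hc, hd,
    he] at h
  have h37 : (37 : ZMod 37) = 0 := by decide
  rw [← mul_left_inj' (show (15 : ZMod 37) ≠ 0 by decide)]
  linear_combination h - 3 * a ^ 6 * h37

end IsNormalizedOctic

/-- Representatives of the pairs `(a, b)` modulo the scalings `(a, b) ↦ (a * s ^ 2, b * s ^ 3)` by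
units `s` of `ZMod 37`. -/
def IsRepresentative (a b : ℕ) : Prop :=
  a = 0 ∧ b < 4 ∨ (a = 1 ∨ a = 2) ∧ b < 19

theorem exists_scaling_isRepresentative (a b : ZMod 37) :
    ∃ s : (ZMod 37)ˣ, ∃ m n : ℕ,
      a * (s : ZMod 37) ^ 2 = m ∧ b * (s : ZMod 37) ^ 3 = n ∧ IsRepresentative m n := by
  obtain rfl | ha := eq_or_ne a 0
  · -- The cubes have index `3` in the group of units, with `1`, `2`, `3` in different cosets.
    obtain ⟨s, hs, hlt⟩ : ∃ s ≠ 0, (b * s ^ 3).val < 4 := by decide +revert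
    exact ⟨.mk0 s hs, 0, (b * s ^ 3).val, by simp, by simp, .inl ⟨rfl, hlt⟩⟩
  · -- The number `2` is not a square; `-s` has the same square as `s` and the opposite cube.
    obtain ⟨s, hs, m, hm, ham⟩ : ∃ s ≠ 0, ∃ m : ℕ, (m = 1 ∨ m = 2) ∧ a * s ^ 2 = m := by
      have h : ∃ s ≠ 0, a * s ^ 2 = 1 ∨ a * s ^ 2 = 2 := by decide +revert
      obtain ⟨s, hs, h | h⟩ := h
      · exact ⟨s, hs, 1, .inl rfl, by simpa using h⟩
      · exact ⟨s, hs, 2, .inr rfl, by simpa using h⟩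
    have hsign : ∀ t : ZMod 37, t.val < 19 ∨ (-t).val < 19 := by decide
    obtain hlt | hlt := hsign (b * s ^ 3)
    · exact ⟨.mk0 s hs, m, (b * s ^ 3).val, ham, by simp, .inr ⟨hm, hlt⟩⟩
    · refine ⟨.mk0 (-s) (neg_ne_zero.mpr hs), m, (-(b * s ^ 3)).val, ?_, ?_, .inr ⟨hm, hlt⟩⟩
      · rw [Units.val_mk0, neg_sq, ham]
      · rw [Units.val_mk0, ZMod.natCast_zmod_val]
        ring

/-- Whether two of `f (n - 1), …, f 0` agree, or one of them is the position of a set bit of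
`seen`, the set of values met before. The recursor is used directly because the kernel evaluates
it faster than compiled structural recursion. -/
noncomputable def hasCollision (f : ℕ → ℕ) (n : ℕ) : ℕ → Bool :=
  n.rec (fun _ ↦ false) fun n ih seen ↦
    (seen ||| 1 <<< f n).beq seen || ih (seen ||| 1 <<< f n)

theorem exists_testBit_of_hasCollision {f : ℕ → ℕ} {n seen : ℕ}
    (h : hasCollision f n seen = true) (hf : Set.InjOn f (Set.Iio n)) :
    ∃ i < n, seen.testBit (f i) = true := by
  induction n generalizing seen with
  | zero => contradiction
  | succ n ih =>
    obtain hseen | hrec : (seen ||| 1 <<< f n).beq seen = true ∨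
        hasCollision f n (seen ||| 1 <<< f n) = true := (Bool.or_eq_true _ _).mp h
    · refine ⟨n, n.lt_succ_self, ?_⟩
      rw [← Nat.eq_of_beq_eq_true hseen, Nat.testBit_or, Nat.one_shiftLeft,
        Nat.testBit_two_pow_self, Bool.or_true]
    · obtain ⟨i, hi, hbit⟩ := ih hrec (hf.mono (Set.Iio_subset_Iio n.le_succ))
      have hne : f n ≠ f i := fun h ↦ hi.ne' (hf n.lt_succ_self (hi.trans n.lt_succ_self) h)
      rw [Nat.testBit_or, Nat.one_shiftLeft, Nat.testBit_two_pow_of_ne hne, Bool.or_false] at hbit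
      exact ⟨i, hi.trans n.lt_succ_self, hbit⟩

theorem not_injOn_of_hasCollision {f : ℕ → ℕ} {n : ℕ} (h : hasCollision f n 0 = true) :
    ¬ Set.InjOn f (Set.Iio n) := by
  intro hf
  obtain ⟨i, -, hi⟩ := exists_testBit_of_hasCollision h hf
  rw [Nat.zero_testBit] at hi
  contradiction

/-- The value at `x` of `X ^ 8 + a X ^ 6 + b X ^ 5 - 2 a ^ 2 X ^ 4 + c X ^ 3 + d X ^ 2 + e X` modulo
`37`, in Horner form and with `35` in place of `-2`. -/
def octicMod (a b c d e x : ℕ) : ℕ :=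
  ((((((x * x + a) * x + b) * x + 35 * a ^ 2) * x + c) * x + d) * x + e) * x % 37

/-- The part without `e` of the relation in `IsNormalizedOctic.coeff_relation`, with coefficients
reduced modulo `37` to avoid subtraction. -/
def freeTerm (a b c d : ℕ) : ℕ :=
  d ^ 2 + 4 * b ^ 2 * d + 25 * a ^ 3 * d + b ^ 4 + 4 * a * c ^ 2 + 33 * a ^ 2 * b * c
    + 17 * a ^ 3 * b ^ 2 + 2 * a ^ 6

theorem natCast_freeTerm (a b c d : ℕ) : (freeTerm a b c d : ZMod 37) =
    d ^ 2 + 4 * (b ^ 2 - 3 * a ^ 3) * d + b ^ 4 + 4 * a * c ^ 2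
      - 4 * a ^ 2 * b * c - 20 * a ^ 3 * b ^ 2 + 2 * a ^ 6 := by
  have h37 : (37 : ZMod 37) = 0 := by decide
  rw [freeTerm]
  push_cast
  linear_combination (a ^ 3 * d + a ^ 2 * b * c + a ^ 3 * b ^ 2) * h37

/-- The solutions `e < 37` of `2 * (c + 4 * a * b) * e + freeTerm a b c d = 0` modulo `37`. The
factor `18` is `-1 / 2`, and the inverse of `c + 4 * a * b` is its `35`th power. -/
def linearCoeffCandidates (a b c d : ℕ) : List ℕ :=
  if (c + 4 * a * b) % 37 = 0 then
    if freeTerm a b c d % 37 = 0 then List.range 37 else []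
  else [18 * freeTerm a b c d * (c + 4 * a * b) ^ 35 % 37]

theorem val_mem_linearCoeffCandidates {a b c d : ℕ} {e : ZMod 37}
    (h : 2 * (c + 4 * a * b : ℕ) * e + freeTerm a b c d = 0) :
    e.val ∈ linearCoeffCandidates a b c d := by
  rw [linearCoeffCandidates]
  split_ifs with hw hn
  · exact List.mem_range.mpr e.val_lt
  · rw [← Nat.dvd_iff_mod_eq_zero, ← ZMod.natCast_eq_zero_iff] at hw hn
    rw [hw, mul_zero, zero_mul, zero_add] at h
    exact absurd h hn
  · rw [← Nat.dvd_iff_mod_eq_zero, ← ZMod.natCast_eq_zero_iff] at hw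
    rw [List.mem_singleton, ← ZMod.val_natCast]
    congr 1
    have h37 : (37 : ZMod 37) = 0 := by decide
    have hfermat := ZMod.pow_card_sub_one_eq_one hw
    rw [Nat.cast_mul, Nat.cast_mul, Nat.cast_pow]
    set w : ZMod 37 := ((c + 4 * a * b : ℕ) : ZMod 37)
    linear_combination (36 * e) * hfermat - 18 * w ^ 35 * h + e * h37

theorem hasCollision_octicMod_zero :
    ∀ b < 4, ∀ c < 37, ∀ d < 37, ∀ e ∈ linearCoeffCandidates 0 b c d,
      hasCollision (octicMod 0 b c d e) 37 0 = true := by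
  decide +kernel

theorem hasCollision_octicMod_one :
    ∀ b < 19, ∀ c < 37, ∀ d < 37, ∀ e ∈ linearCoeffCandidates 1 b c d,
      hasCollision (octicMod 1 b c d e) 37 0 = true := by
  decide +kernel

theorem hasCollision_octicMod_two :
    ∀ b < 19, ∀ c < 37, ∀ d < 37, ∀ e ∈ linearCoeffCandidates 2 b c d,
      hasCollision (octicMod 2 b c d e) 37 0 = true := by
  decide +kernel

theorem IsRepresentative.hasCollision {a b c d e : ℕ} (h : IsRepresentative a b) (hc : c < 37)
    (hd : d < 37) (he : e ∈ linearCoeffCandidates a b c d) :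
    hasCollision (octicMod a b c d e) 37 0 = true := by
  obtain ⟨rfl, hb⟩ | ⟨rfl | rfl, hb⟩ := h
  · exact hasCollision_octicMod_zero b hb c hc d hd e he
  · exact hasCollision_octicMod_one b hb c hc d hd e he
  · exact hasCollision_octicMod_two b hb c hc d hd e he

namespace IsNormalizedOctic

variable {f : (ZMod 37)[X]}

theorem not_hasCollision (hf : IsNormalizedOctic f) (hbij : Function.Bijective fun x ↦ f.eval x)
    {a b c d e : ℕ} (ha : f.coeff 6 = a) (hb : f.coeff 5 = b) (hc : f.coeff 3 = c)
    (hd : f.coeff 2 = d) (he : f.coeff 1 = e) :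
    ¬ hasCollision (octicMod a b c d e) 37 0 = true := by
  refine fun h ↦ not_injOn_of_hasCollision h fun i hi j hj hij ↦ ?_
  have heval (x : ℕ) : f.eval (x : ZMod 37) = octicMod a b c d e x := by
    have h37 : (37 : ZMod 37) = 0 := by decide
    rw [hf.eval_eq, hf.coeff_four_eq hbij, ha, hb, hc, hd, he, octicMod, ZMod.natCast_mod]
    push_cast
    linear_combination -(a : ZMod 37) ^ 2 * x ^ 4 * h37
  have hcast : (i : ZMod 37) = j := hbij.injective (by simp only [heval, hij])
  rwa [ZMod.natCast_eq_natCast_iff', Nat.mod_eq_of_lt hi, Nat.mod_eq_of_lt hj] at hcast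

theorem not_bijective_of_isRepresentative (hf : IsNormalizedOctic f) {a b : ℕ}
    (ha : f.coeff 6 = a) (hb : f.coeff 5 = b) (h : IsRepresentative a b) :
    ¬ Function.Bijective fun x ↦ f.eval x := by
  intro hbij
  obtain ⟨c, hc, hc_lt⟩ : ∃ c : ℕ, f.coeff 3 = c ∧ c < 37 :=
    ⟨_, (ZMod.natCast_zmod_val _).symm, ZMod.val_lt _⟩
  obtain ⟨d, hd, hd_lt⟩ : ∃ d : ℕ, f.coeff 2 = d ∧ d < 37 :=
    ⟨_, (ZMod.natCast_zmod_val _).symm, ZMod.val_lt _⟩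
  have he : (f.coeff 1).val ∈ linearCoeffCandidates a b c d := by
    apply val_mem_linearCoeffCandidates
    rw [natCast_freeTerm]
    push_cast
    exact hf.coeff_relation hbij ha hb hc hd rfl
  exact hf.not_hasCollision hbij ha hb hc hd (ZMod.natCast_zmod_val _).symm
    (h.hasCollision hc_lt hd_lt he)

end IsNormalizedOctic

end ZMod37

theorem no_normalized_pp_deg8_F37 (f : Polynomial (ZMod 37))
    (hmonic : f.Monic) (hdeg : f.natDegree = 8)
    (h7 : f.coeff 7 = 0) (h0 : f.coeff 0 = 0) :
    ¬ Function.Bijective (fun a : ZMod 37 => f.eval a) := by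
  intro hbij
  have hf : IsNormalizedOctic f := ⟨hmonic, hdeg, h7, h0⟩
  obtain ⟨s, a, b, ha, hb, hab⟩ := exists_scaling_isRepresentative (f.coeff 6) (f.coeff 5)
  refine (hf.scaleRoots s).not_bijective_of_isRepresentative ?_ ?_ hab
    (bijective_eval_scaleRoots hbij s)
  · rw [coeff_scaleRoots, hdeg, ha]
  · rw [coeff_scaleRoots, hdeg, hb]
end

section
/- There is no permutation polynomial of degree 8 over the finite field F_43. -/
/-!
If `f` permutes `𝔽_q`, then `∑ f(x) ^ k = ∑ x ^ k = 0` for `k < q - 1` (Hermite), so the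
coefficients of `f ^ k` at the positive multiples of `q - 1` add up to zero. For `q = 43` an affine
change of variable brings an octic into the form `X⁸ + a₆X⁶ + ⋯ + a₁X` with `a₆ ∈ {0, 1, -1}`, with
a choice of the sign of `a₅` left. The condition for `k = 6` then determines `a₂` from the higher
coefficients, and the one for `k = 7` is a quadratic equation for `a₁`, whose roots are explicit
because `43 ≡ 3 mod 4`. By computation, the conditions for `8 ≤ k ≤ 11` exclude every choice of
`a₆, a₅, a₄, a₃` except the one giving `X⁸`, which takes the same value at `1` and `-1`. This
computation reads off the coefficients of `f ^ k` from the digits of the integer `f(B) ^ k` in a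
large base `B` (Kronecker substitution).
-/

open Polynomial Finset

namespace PermutationOctic

section FiniteField

variable {K : Type*} [Field K] [Fintype K]

theorem sum_pow_of_ne_zero {i : ℕ} (hi : i ≠ 0) :
    ∑ x : K, x ^ i = if Fintype.card K - 1 ∣ i then -1 else 0 := by
  classical
  calc ∑ x : K, x ^ i
    _ = ∑ x : {x : K // x ≠ 0}, (x : K) ^ i := by
      rw [← sum_erase univ (a := 0) (zero_pow hi)]
      exact sum_subtype _ (by simp) _
    _ = ∑ x : Kˣ, (x ^ i : K) :=
      (Fintype.sum_equiv unitsEquivNeZero _ _ fun _ => rfl).symm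
    _ = _ := FiniteField.sum_pow_units K i

theorem sum_eval_eq_neg_sum_coeff {p : K[X]} {n : ℕ} (hn : p.natDegree < n) :
    ∑ x, p.eval x = -∑ i ∈ range n with i ≠ 0 ∧ Fintype.card K - 1 ∣ i, p.coeff i := by
  have sum_pow (i : ℕ) : ∑ x : K, x ^ i =
      if i ≠ 0 ∧ Fintype.card K - 1 ∣ i then -1 else 0 := by
    rcases eq_or_ne i 0 with rfl | hi
    · simp
    · simp [sum_pow_of_ne_zero hi, hi]
  simp_rw [eval_eq_sum_range' hn]
  rw [sum_comm]
  simp_rw [← mul_sum, sum_pow, sum_filter, ← sum_neg_distrib]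
  exact sum_congr rfl fun i _ => by split_ifs <;> simp

/-- The necessary half of Hermite's criterion. -/
theorem sum_coeff_pow_eq_zero_of_bijective {f : K[X]} (hf : Function.Bijective fun x => f.eval x)
    {k n : ℕ} (hk : k < Fintype.card K - 1) (hn : (f ^ k).natDegree < n) :
    ∑ i ∈ range n with i ≠ 0 ∧ Fintype.card K - 1 ∣ i, (f ^ k).coeff i = 0 := by
  rw [← neg_eq_zero, ← sum_eval_eq_neg_sum_coeff hn]
  simp_rw [eval_pow]
  rw [hf.sum_comp fun y => y ^ k, FiniteField.sum_pow_lt_card_sub_one K k hk]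

theorem ringChar_ne_two_of_card_mod_four (hK : Fintype.card K % 4 = 3) : ringChar K ≠ 2 :=
  fun h => by
    have := FiniteField.even_card_iff_char_two.mp h
    lia

theorem eq_or_eq_neg_pow_of_sq_eq (hK : Fintype.card K % 4 = 3) {t d : K} (h : t ^ 2 = d) :
    t = d ^ ((Fintype.card K + 1) / 4) ∨ t = -d ^ ((Fintype.card K + 1) / 4) := by
  rcases eq_or_ne t 0 with rfl | ht
  · have : (Fintype.card K + 1) / 4 ≠ 0 := by lia
    simp [← h, this]
  have hd : d ^ ((Fintype.card K + 1) / 4) = t ^ (Fintype.card K / 2) * t := by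
    rw [← h, ← pow_mul, ← pow_succ]
    congr 1
    lia
  rcases FiniteField.pow_dichotomy (ringChar_ne_two_of_card_mod_four hK) ht with h1 | h1 <;>
    simp [hd, h1]

theorem exists_mul_sq_eq_one_or_neg_one (hK : Fintype.card K % 4 = 3) {a : K} (ha : a ≠ 0) :
    ∃ d ≠ 0, a * d ^ 2 = 1 ∨ a * d ^ 2 = -1 := by
  refine ⟨a ^ (Fintype.card K / 4), pow_ne_zero _ ha, ?_⟩
  have : a * (a ^ (Fintype.card K / 4)) ^ 2 = a ^ (Fintype.card K / 2) := by
    rw [← pow_mul, ← pow_succ']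
    congr 1
    lia
  simpa only [this] using FiniteField.pow_dichotomy (ringChar_ne_two_of_card_mod_four hK) ha

end FiniteField

section Coefficients

variable {R : Type*} [CommSemiring R]

theorem coeff_add_C_mul_X_pow_pow {g : R[X]} (a : R) {d m n t k : ℕ} (hg : g.natDegree ≤ d)
    (hm : m ≤ d) (htn : t * m ≤ n) (hkd : k * d < n + t * (d - m)) :
    ((g + C a * X ^ m) ^ k).coeff n =
      ∑ j ∈ range t, k.choose j * a ^ j * (g ^ (k - j)).coeff (n - j * m) := by
  have hterm (j : ℕ) : ((C a * X ^ m) ^ j * g ^ (k - j) * (k.choose j : R[X])).coeff n =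
      if j * m ≤ n then k.choose j * a ^ j * (g ^ (k - j)).coeff (n - j * m) else 0 := by
    have : (C a * X ^ m) ^ j * g ^ (k - j) * (k.choose j : R[X]) =
        C (k.choose j * a ^ j) * (g ^ (k - j) * X ^ (j * m)) := by
      simp only [mul_pow, ← pow_mul, C_mul, C_pow, map_natCast, mul_comm m]
      ring
    rw [this, coeff_C_mul, coeff_mul_X_pow', mul_ite, mul_zero]
  rw [add_comm, add_pow, finsetSum_coeff]
  refine sum_congr_of_eq_on_inter (fun j hj hjt => ?_) (fun j _ hjk => ?_) (fun j _ hjt => ?_)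
  · rw [hterm]
    split_ifs with hjn
    · have hdeg : (g ^ (k - j)).natDegree < n - j * m := by
        have hjk : j ≤ k := by simpa [Nat.lt_succ_iff] using hj
        have htj : t ≤ j := by simpa using hjt
        obtain ⟨e, rfl⟩ := Nat.exists_eq_add_of_le hm
        obtain ⟨l, rfl⟩ := Nat.exists_eq_add_of_le hjk
        have := natDegree_pow_le_of_le l hg
        have := Nat.mul_le_mul_right e htj
        simp only [Nat.add_sub_cancel_left] at *
        nlinarith [Nat.sub_add_cancel hjn]
      rw [coeff_eq_zero_of_natDegree_lt hdeg, mul_zero]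
    · rfl
  · rw [Nat.choose_eq_zero_of_lt (by simpa [Nat.lt_succ_iff] using hjk)]
    simp
  · rw [hterm, if_pos]
    exact (Nat.mul_le_mul_right m (mem_range.mp hjt).le).trans htn

end Coefficients

section Octic

variable {R : Type*}

/-- The monic octic `X⁸ + a₆X⁶ + a₅X⁵ + a₄X⁴ + a₃X³ + a₂X² + a₁X`: the shape to which affine
substitutions reduce every octic when `8` is invertible. -/
noncomputable def octic [Semiring R] (a₆ a₅ a₄ a₃ a₂ a₁ : R) : R[X] :=
  X ^ 8 + C a₆ * X ^ 6 + C a₅ * X ^ 5 + C a₄ * X ^ 4 + C a₃ * X ^ 3 + C a₂ * X ^ 2 + C a₁ * X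

theorem octic_zero [Semiring R] : octic (0 : R) 0 0 0 0 0 = X ^ 8 := by simp [octic]

theorem octic_eq_add_linear [Semiring R] (a₆ a₅ a₄ a₃ a₂ a₁ : R) :
    octic a₆ a₅ a₄ a₃ a₂ a₁ = octic a₆ a₅ a₄ a₃ a₂ 0 + C a₁ * X ^ 1 := by
  simp [octic]

theorem octic_eq_add_quadratic [Semiring R] (a₆ a₅ a₄ a₃ a₂ : R) :
    octic a₆ a₅ a₄ a₃ a₂ 0 = octic a₆ a₅ a₄ a₃ 0 0 + C a₂ * X ^ 2 := by
  simp [octic]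

theorem eval_octic [Semiring R] (a₆ a₅ a₄ a₃ a₂ a₁ x : R) :
    (octic a₆ a₅ a₄ a₃ a₂ a₁).eval x =
      x ^ 8 + a₆ * x ^ 6 + a₅ * x ^ 5 + a₄ * x ^ 4 + a₃ * x ^ 3 + a₂ * x ^ 2 + a₁ * x := by
  simp only [octic, eval_add, eval_C_mul, eval_X_pow, eval_X]

theorem map_octic {S : Type*} [Semiring R] [Semiring S] (φ : R →+* S) (a₆ a₅ a₄ a₃ a₂ a₁ : R) :
    (octic a₆ a₅ a₄ a₃ a₂ a₁).map φ = octic (φ a₆) (φ a₅) (φ a₄) (φ a₃) (φ a₂) (φ a₁) := by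
  simp [octic]

theorem natDegree_octic_le [Semiring R] (a₆ a₅ a₄ a₃ a₂ a₁ : R) :
    (octic a₆ a₅ a₄ a₃ a₂ a₁).natDegree ≤ 8 := by
  unfold octic
  compute_degree

theorem coeff_octic_pow_top [Semiring R] (a₆ a₅ a₄ a₃ a₂ a₁ : R) (k : ℕ) :
    (octic a₆ a₅ a₄ a₃ a₂ a₁ ^ k).coeff (k * 8) = 1 := by
  have : (octic a₆ a₅ a₄ a₃ a₂ a₁).coeff 8 = 1 := by simp [octic]
  rw [coeff_pow_of_natDegree_le (natDegree_octic_le ..), this, one_pow]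

theorem coeff_octic_pow_six [CommSemiring R] (a₆ a₅ a₄ a₃ a₂ a₁ : R) :
    (octic a₆ a₅ a₄ a₃ a₂ a₁ ^ 6).coeff 42 = (octic a₆ a₅ a₄ a₃ 0 0 ^ 6).coeff 42 + 6 * a₂ := by
  have htop := coeff_octic_pow_top a₆ a₅ a₄ a₃ 0 0 5
  rw [octic_eq_add_linear, coeff_add_C_mul_X_pow_pow (t := 1) _ (natDegree_octic_le ..)
      (by norm_num) (by norm_num) (by norm_num), octic_eq_add_quadratic]
  simp only [sum_range_one, Nat.choose_zero_right, pow_zero, Nat.sub_zero, zero_mul]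
  rw [coeff_add_C_mul_X_pow_pow (t := 2) _ (natDegree_octic_le ..)
      (by norm_num) (by norm_num) (by norm_num)]
  simp [sum_range_succ, htop]

theorem coeff_octic_pow_seven [CommSemiring R] (a₆ a₅ a₄ a₃ a₂ a₁ : R) :
    (octic a₆ a₅ a₄ a₃ a₂ a₁ ^ 7).coeff 42 = (octic a₆ a₅ a₄ a₃ a₂ 0 ^ 7).coeff 42 +
      7 * a₁ * (octic a₆ a₅ a₄ a₃ a₂ 0 ^ 6).coeff 41 + 21 * a₁ ^ 2 := by
  have htop := coeff_octic_pow_top a₆ a₅ a₄ a₃ a₂ 0 5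
  rw [octic_eq_add_linear, coeff_add_C_mul_X_pow_pow (t := 3) _ (natDegree_octic_le ..)
      (by norm_num) (by norm_num) (by norm_num)]
  have : Nat.choose 7 2 = 21 := rfl
  simp [sum_range_succ, htop, this]

end Octic

section NormalForm

variable {K : Type*} [Field K]

theorem exists_coeff_taylor_natDegree_sub_one_eq_zero {f : K[X]} (hf : (f.natDegree : K) ≠ 0) :
    ∃ t, (taylor t f).coeff (f.natDegree - 1) = 0 := by
  obtain ⟨n, hn⟩ : ∃ n, f.natDegree = n + 1 :=
    Nat.exists_eq_succ_of_ne_zero fun h => hf (by rw [h, Nat.cast_zero])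
  have hlead : f.coeff (n + 1) ≠ 0 := by
    rw [← hn, coeff_natDegree, leadingCoeff_ne_zero]
    rintro rfl
    simp at hn
  rw [hn] at hf
  refine ⟨-f.coeff n / ((n + 1 : ℕ) * f.coeff (n + 1)), ?_⟩
  have hdeg : (hasseDeriv n f).natDegree ≤ 1 := by
    have := natDegree_hasseDeriv_le f n
    lia
  rw [hn, Nat.add_sub_cancel, taylor_coeff, eval_eq_sum_range' (Nat.lt_succ_of_le hdeg)]
  simp only [sum_range_succ, range_one, sum_singleton, hasseDeriv_coeff, zero_add, Nat.choose_self,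
    Nat.cast_one, one_mul, pow_zero, mul_one, pow_one, add_comm 1 n, Nat.choose_succ_self_right]
  field_simp
  ring

theorem exists_bijective_octic {f : K[X]} (hdeg : f.natDegree = 8) (h8 : (8 : K) ≠ 0)
    (hf : Function.Bijective fun x => f.eval x) :
    ∃ a₆ a₅ a₄ a₃ a₂ a₁ : K, Function.Bijective fun x => (octic a₆ a₅ a₄ a₃ a₂ a₁).eval x := by
  obtain ⟨t, ht⟩ := exists_coeff_taylor_natDegree_sub_one_eq_zero (f := f) (by simpa [hdeg])
  set g := taylor t f with hg
  have hgdeg : g.natDegree = 8 := by rw [hg, natDegree_taylor, hdeg]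
  have hlead : g.coeff 8 ≠ 0 := by
    rw [← hgdeg, coeff_natDegree, leadingCoeff_ne_zero]
    intro h
    simp [h] at hgdeg
  have hg7 : g.coeff 7 = 0 := by simpa only [hdeg] using ht
  refine ⟨g.coeff 6 / g.coeff 8, g.coeff 5 / g.coeff 8, g.coeff 4 / g.coeff 8,
    g.coeff 3 / g.coeff 8, g.coeff 2 / g.coeff 8, g.coeff 1 / g.coeff 8, ?_⟩
  have heval (x : K) : (octic (g.coeff 6 / g.coeff 8) (g.coeff 5 / g.coeff 8)
      (g.coeff 4 / g.coeff 8) (g.coeff 3 / g.coeff 8) (g.coeff 2 / g.coeff 8)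
      (g.coeff 1 / g.coeff 8)).eval x = (f.eval (x + t) - g.coeff 0) / g.coeff 8 := by
    rw [eval_octic, ← taylor_eval, ← hg, eval_eq_sum_range' (n := 9) (by lia)]
    simp only [sum_range_succ, range_one, sum_singleton, hg7]
    field_simp
    ring
  simp_rw [heval]
  exact (Equiv.divRight₀ _ hlead).bijective.comp
    ((Equiv.subRight (g.coeff 0)).bijective.comp (hf.comp (Equiv.addRight t).bijective))

theorem bijective_octic_scale {a₆ a₅ a₄ a₃ a₂ a₁ d : K} (hd : d ≠ 0)
    (hf : Function.Bijective fun x => (octic a₆ a₅ a₄ a₃ a₂ a₁).eval x) :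
    Function.Bijective fun x => (octic (a₆ * d ^ 2) (a₅ * d ^ 3) (a₄ * d ^ 4) (a₃ * d ^ 5)
      (a₂ * d ^ 6) (a₁ * d ^ 7)).eval x := by
  have heval (x : K) : (octic (a₆ * d ^ 2) (a₅ * d ^ 3) (a₄ * d ^ 4) (a₃ * d ^ 5) (a₂ * d ^ 6)
      (a₁ * d ^ 7)).eval x = d ^ 8 * (octic a₆ a₅ a₄ a₃ a₂ a₁).eval (d⁻¹ * x) := by
    simp only [eval_octic]
    field_simp
  simp_rw [heval]
  exact (mulLeft_bijective₀ _ (pow_ne_zero 8 hd)).comp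
    (hf.comp (mulLeft_bijective₀ _ (inv_ne_zero hd)))

end NormalForm

section Kronecker

theorem eval_div_pow_mod_eq_coeff {P : ℕ[X]} {B : ℕ} (hB : ∀ i, P.coeff i < B) (n : ℕ) :
    P.eval B / B ^ n % B = P.coeff n := by
  have heval (Q : ℕ[X]) : Q.eval B = B * Q.divX.eval B + Q.coeff 0 := by
    conv_lhs => rw [← divX_mul_X_add Q]
    rw [eval_add, eval_mul_X, eval_C, mul_comm]
  induction n generalizing P with
  | zero => rw [heval, pow_zero, Nat.div_one, Nat.mul_add_mod, Nat.mod_eq_of_lt (hB 0)]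
  | succ n ih =>
    have hdiv : P.eval B / B = P.divX.eval B := by
      rw [heval, Nat.mul_add_div (Nat.zero_lt_of_lt (hB 0)), Nat.div_eq_of_lt (hB 0),
        add_zero]
    rw [pow_succ', ← Nat.div_div_eq_div_mul, hdiv, ih fun i => ?_, coeff_divX]
    simpa only [coeff_divX] using hB (i + 1)

theorem coeff_le_eval_one (P : ℕ[X]) (n : ℕ) : P.coeff n ≤ P.eval 1 := by
  rcases le_or_gt n P.natDegree with hn | hn
  · rw [eval_eq_sum_range]
    simp only [one_pow, mul_one]
    exact single_le_sum_of_canonicallyOrdered (mem_range_succ_iff.mpr hn)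
  · rw [coeff_eq_zero_of_natDegree_lt hn]
    exact Nat.zero_le _

theorem eval_pow_div_pow_mod_eq_coeff {P : ℕ[X]} {B k : ℕ} (hB : P.eval 1 ^ k < B) (n : ℕ) :
    P.eval B ^ k / B ^ n % B = (P ^ k).coeff n := by
  rw [← eval_pow]
  refine eval_div_pow_mod_eq_coeff (fun i => (coeff_le_eval_one _ i).trans_lt ?_) n
  rwa [eval_pow]

end Kronecker

section Hermite

theorem fact_prime_fortyThree : Fact (Nat.Prime 43) := ⟨by norm_num⟩

attribute [local instance] fact_prime_fortyThree

/-- Hermite's necessary condition for an octic over `𝔽₄₃` to be a permutation polynomial, for the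
exponents `k ≤ 15`: below degree `8 * 15` the only positive multiples of `42` are `42` and `84`. -/
def SatisfiesHermite (f : (ZMod 43)[X]) : Prop :=
  ∀ k ≤ 15, (f ^ k).coeff 42 + (f ^ k).coeff 84 = 0

variable {f : (ZMod 43)[X]} {a₆ a₅ a₄ a₃ a₂ a₁ : ZMod 43}

theorem satisfiesHermite_of_bijective (hdeg : f.natDegree ≤ 8)
    (hf : Function.Bijective fun x => f.eval x) : SatisfiesHermite f := by
  intro k hk
  have hpow : (f ^ k).natDegree < 126 := by
    have := natDegree_pow_le_of_le k hdeg
    lia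
  have hmult : {i ∈ range 126 | i ≠ 0 ∧ Fintype.card (ZMod 43) - 1 ∣ i} = {42, 84} := by
    rw [ZMod.card]
    decide
  have hsum := sum_coeff_pow_eq_zero_of_bijective hf (k := k) (by rw [ZMod.card]; lia) hpow
  rwa [hmult, sum_pair (by decide)] at hsum

theorem SatisfiesHermite.coeff_pow_eq_zero (hf : SatisfiesHermite f) (hdeg : f.natDegree ≤ 8)
    {k : ℕ} (hk : k ≤ 10) : (f ^ k).coeff 42 = 0 := by
  have hpow : (f ^ k).natDegree < 84 := by
    have := natDegree_pow_le_of_le k hdeg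
    lia
  simpa only [coeff_eq_zero_of_natDegree_lt hpow, add_zero] using hf k (by lia)

theorem quadratic_coeff_eq_of_satisfiesHermite
    (hf : SatisfiesHermite (octic a₆ a₅ a₄ a₃ a₂ a₁)) :
    a₂ = (octic a₆ a₅ a₄ a₃ 0 0 ^ 6).coeff 42 * 7 := by
  have h := hf.coeff_pow_eq_zero (natDegree_octic_le ..) (k := 6) (by norm_num)
  rw [coeff_octic_pow_six] at h
  have h43 : (43 : ZMod 43) = 0 := by decide
  linear_combination (-7) * h + a₂ * h43

theorem linear_coeff_eq_of_satisfiesHermite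
    (hf : SatisfiesHermite (octic a₆ a₅ a₄ a₃ a₂ a₁)) :
    let b := (octic a₆ a₅ a₄ a₃ a₂ 0 ^ 6).coeff 41
    let c := (octic a₆ a₅ a₄ a₃ a₂ 0 ^ 7).coeff 42
    let d := b * b * 6 + c * 2
    d ^ 11 * d ^ 11 = d ∧ (a₁ = b * 7 + d ^ 11 ∨ a₁ = b * 7 - d ^ 11) := by
  intro b c d
  have h := hf.coeff_pow_eq_zero (natDegree_octic_le ..) (k := 7) (by norm_num)
  rw [coeff_octic_pow_seven] at h
  have h43 : (43 : ZMod 43) = 0 := by decide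
  -- `h` is `21a₁² + 7ba₁ + c = 0`; since `21 * (-2) = 1`, multiplying by `-2` makes it monic.
  have hsq : (a₁ - b * 7) ^ 2 = d := by
    linear_combination (-2) * h + (b ^ 2 + a₁ ^ 2) * h43
  have hroot : a₁ - b * 7 = d ^ 11 ∨ a₁ - b * 7 = -d ^ 11 := by
    simpa only [ZMod.card] using eq_or_eq_neg_pow_of_sq_eq (by rw [ZMod.card]) hsq
  refine ⟨?_, hroot.imp eq_add_of_sub_eq' fun h => by linear_combination h⟩
  rw [← sq, ← sq_eq_sq_iff_eq_or_eq_neg.mpr hroot, hsq]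

theorem exists_bijective_octic_normalized (hdeg : f.natDegree = 8)
    (hf : Function.Bijective fun x => f.eval x) :
    ∃ b₆ b₅ b₄ b₃ b₂ b₁ : ZMod 43, (b₆ = 0 ∨ b₆ = 1 ∨ b₆ = -1) ∧ b₅.val < 22 ∧
      Function.Bijective fun x => (octic b₆ b₅ b₄ b₃ b₂ b₁).eval x := by
  obtain ⟨a₆, a₅, a₄, a₃, a₂, a₁, ha⟩ := exists_bijective_octic hdeg (by decide) hf
  obtain ⟨d, hd, hd₆⟩ : ∃ d ≠ 0, a₆ * d ^ 2 = 0 ∨ a₆ * d ^ 2 = 1 ∨ a₆ * d ^ 2 = -1 := by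
    rcases eq_or_ne a₆ 0 with rfl | ha₆
    · exact ⟨1, one_ne_zero, .inl (zero_mul _)⟩
    · obtain ⟨d, hd, h⟩ := exists_mul_sq_eq_one_or_neg_one (by rw [ZMod.card]) ha₆
      exact ⟨d, hd, .inr h⟩
  obtain ⟨e, he, he₅⟩ : ∃ e : ZMod 43, e ^ 2 = 1 ∧ (a₅ * d ^ 3 * e ^ 3).val < 22 := by
    rcases lt_or_ge (a₅ * d ^ 3).val 22 with h | h
    · exact ⟨1, one_pow 2, by simpa using h⟩
    · refine ⟨-1, neg_one_sq, ?_⟩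
      have : NeZero (a₅ * d ^ 3) := ⟨fun h0 => by simp [h0] at h⟩
      rw [Odd.neg_one_pow (by decide), mul_neg_one, ZMod.val_neg_of_ne_zero]
      lia
  have he0 : e ≠ 0 := fun h => by simp [h] at he
  refine ⟨_, _, _, _, _, _, ?_, ?_, bijective_octic_scale (mul_ne_zero hd he0) ha⟩
  · simpa only [mul_pow, he, mul_one] using hd₆
  · simpa only [mul_pow, mul_assoc] using he₅

end Hermite

section Elimination

/-- The base `B` of the Kronecker substitution: it exceeds every coefficient of `f ^ k` for `k ≤ 11`
and an octic `f` with coefficients below `43`, as `(1 + 6 * 42) ^ 11 < 2 ^ 88`.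

The computation below uses `Nat.pow`, `Nat.add`, … directly, since the kernel evaluates these by
arbitrary-precision arithmetic without unfolding instances first. -/
def kroneckerBase : ℕ :=
  Nat.pow 2 88

/-- The value at `kroneckerBase` of the octic with the given natural number coefficients. -/
def packedOctic (a₆ a₅ a₄ a₃ a₂ a₁ : ℕ) : ℕ :=
  ((((((kroneckerBase.pow 8).add (a₆.mul (kroneckerBase.pow 6))).add
    (a₅.mul (kroneckerBase.pow 5))).add (a₄.mul (kroneckerBase.pow 4))).add
    (a₃.mul (kroneckerBase.pow 3))).add (a₂.mul (kroneckerBase.pow 2))).add (a₁.mul kroneckerBase)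

/-- The `n`th coefficient modulo `43` of the `k`th power of the polynomial whose value at
`kroneckerBase` is `F`. -/
def packedPowCoeff (F k n : ℕ) : ℕ :=
  (((F.pow k).div (kroneckerBase.pow n)).mod kroneckerBase).mod 43

/-- Application of `c` to `n`; the match on `n` makes the kernel evaluate `n` before substituting it
into `c`. -/
def withNumeral {α : Type*} (n : ℕ) (c : ℕ → α) : α :=
  match n with
  | 0 => c 0
  | m + 1 => c (m + 1)

/-- Whether the octic is `X ^ 8` or violates Hermite's condition for one of the exponents
`8`, …, `11`. -/
def isExcluded (a₆ a₅ a₄ a₃ a₂ a₁ : ℕ) : Bool :=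
  [8, 9, 10, 11].any (fun k => !(((packedPowCoeff (packedOctic a₆ a₅ a₄ a₃ a₂ a₁) k 42).add
    (packedPowCoeff (packedOctic a₆ a₅ a₄ a₃ a₂ a₁) k 84)).mod 43).beq 0) ||
  (((((a₆.add a₅).add a₄).add a₃).add a₂).add a₁).beq 0

/-- Whether `isExcluded` holds for both octics that have the given coefficients and can satisfy
Hermite's condition for the exponents `6`, which determines `a₂`, and `7`, which leaves two values
of `a₁`. -/
def isExcludedAbove (a₆ a₅ a₄ a₃ : ℕ) : Bool :=
  withNumeral (((packedPowCoeff (packedOctic a₆ a₅ a₄ a₃ 0 0) 6 42).mul 7).mod 43) fun a₂ =>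
  withNumeral (packedPowCoeff (packedOctic a₆ a₅ a₄ a₃ a₂ 0) 6 41) fun b =>
  withNumeral (packedPowCoeff (packedOctic a₆ a₅ a₄ a₃ a₂ 0) 7 42) fun c =>
  withNumeral ((((b.mul b).mul 6).add (c.mul 2)).mod 43) fun d =>
  withNumeral ((d.pow 11).mod 43) fun r =>
  !((r.mul r).mod 43).beq d ||
    withNumeral (((b.mul 7).add r).mod 43) (isExcluded a₆ a₅ a₄ a₃ a₂) &&
    withNumeral (((b.mul 7).add (r.mul 42)).mod 43) (isExcluded a₆ a₅ a₄ a₃ a₂)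

/-- Whether `isExcludedAbove` holds for all choices of the next two coefficients. -/
def isExcludedRow (a₆ a₅ : ℕ) : Bool :=
  (List.range 43).all fun a₄ => (List.range 43).all fun a₃ => isExcludedAbove a₆ a₅ a₄ a₃

theorem withNumeral_eq {α : Type*} (n : ℕ) (c : ℕ → α) : withNumeral n c = c n := by
  cases n <;> rfl

theorem packedPowCoeff_packedOctic (a₆ a₅ a₄ a₃ a₂ a₁ : ZMod 43) {k : ℕ} (hk : k ≤ 11) (n : ℕ) :
    packedPowCoeff (packedOctic a₆.val a₅.val a₄.val a₃.val a₂.val a₁.val) k n =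
      ((octic a₆ a₅ a₄ a₃ a₂ a₁ ^ k).coeff n).val := by
  set P : ℕ[X] := octic a₆.val a₅.val a₄.val a₃.val a₂.val a₁.val with hP
  have hpack : packedOctic a₆.val a₅.val a₄.val a₃.val a₂.val a₁.val = P.eval kroneckerBase := by
    rw [hP, eval_octic]
    rfl
  have hmap : P.map (Nat.castRingHom (ZMod 43)) = octic a₆ a₅ a₄ a₃ a₂ a₁ := by
    simp [hP, map_octic]
  have hsmall : P.eval 1 ^ k < kroneckerBase := by
    have hone : P.eval 1 ≤ 253 := by
      have (a : ZMod 43) : a.val < 43 := a.val_lt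
      rw [hP, eval_octic]
      grind
    calc P.eval 1 ^ k ≤ 253 ^ k := Nat.pow_le_pow_left hone k
      _ ≤ 253 ^ 11 := Nat.pow_le_pow_right (by norm_num) hk
      _ < kroneckerBase := by decide
  rw [hpack, ← hmap, ← Polynomial.map_pow, coeff_map, ← eval_pow_div_pow_mod_eq_coeff hsmall,
    eq_natCast, ZMod.val_natCast]
  rfl

variable {a₆ a₅ a₄ a₃ a₂ a₁ : ZMod 43}

theorem eq_X_pow_eight_of_isExcluded
    (h : isExcluded a₆.val a₅.val a₄.val a₃.val a₂.val a₁.val = true)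
    (hf : SatisfiesHermite (octic a₆ a₅ a₄ a₃ a₂ a₁)) : octic a₆ a₅ a₄ a₃ a₂ a₁ = X ^ 8 := by
  rw [isExcluded, Bool.or_eq_true, List.any_eq_true, Nat.beq_eq] at h
  rcases h with ⟨k, hk, hne⟩ | hzero
  · have hk11 : k ≤ 11 := by
      simp only [List.mem_cons, List.not_mem_nil] at hk
      lia
    have hsum := congrArg ZMod.val (hf k (by lia))
    rw [ZMod.val_add, ← packedPowCoeff_packedOctic _ _ _ _ _ _ hk11,
      ← packedPowCoeff_packedOctic _ _ _ _ _ _ hk11] at hsum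
    rw [Bool.not_eq_true', ← Bool.not_eq_true, Nat.beq_eq] at hne
    exact absurd hsum hne
  · simp only [Nat.add_eq, Nat.add_eq_zero_iff, ZMod.val_eq_zero] at hzero
    obtain ⟨⟨⟨⟨⟨rfl, rfl⟩, rfl⟩, rfl⟩, rfl⟩, rfl⟩ := hzero
    exact octic_zero

theorem mod_eq_val {m n : ℕ} {x : ZMod m} (hx : (n : ZMod m) = x) : n.mod m = x.val := by
  rw [← hx]
  exact (ZMod.val_natCast m n).symm

theorem eq_X_pow_eight_of_isExcludedAbove
    (h : isExcludedAbove a₆.val a₅.val a₄.val a₃.val = true)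
    (hf : SatisfiesHermite (octic a₆ a₅ a₄ a₃ a₂ a₁)) : octic a₆ a₅ a₄ a₃ a₂ a₁ = X ^ 8 := by
  have hc₆ := packedPowCoeff_packedOctic a₆ a₅ a₄ a₃ 0 0 (k := 6) (by norm_num) 42
  have hb := packedPowCoeff_packedOctic a₆ a₅ a₄ a₃ a₂ 0 (k := 6) (by norm_num) 41
  have hc := packedPowCoeff_packedOctic a₆ a₅ a₄ a₃ a₂ 0 (k := 7) (by norm_num) 42
  have hquad := quadratic_coeff_eq_of_satisfiesHermite hf
  rw [ZMod.val_zero] at hc₆ hb hc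
  set c₆ := (octic a₆ a₅ a₄ a₃ 0 0 ^ 6).coeff 42
  set b := (octic a₆ a₅ a₄ a₃ a₂ 0 ^ 6).coeff 41
  set c := (octic a₆ a₅ a₄ a₃ a₂ 0 ^ 7).coeff 42
  set d := b * b * 6 + c * 2 with hd
  obtain ⟨hsquare, hlin⟩ : d ^ 11 * d ^ 11 = d ∧ (a₁ = b * 7 + d ^ 11 ∨ a₁ = b * 7 - d ^ 11) :=
    linear_coeff_eq_of_satisfiesHermite hf
  have ha₂ : (c₆.val.mul 7).mod 43 = a₂.val := mod_eq_val (by simpa using hquad.symm)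
  have hdisc : (((b.val.mul b.val).mul 6).add (c.val.mul 2)).mod 43 = d.val :=
    mod_eq_val (by simp [hd])
  have hroot : (d.val.pow 11).mod 43 = (d ^ 11).val := mod_eq_val (by simp)
  have hsq : ((d ^ 11).val.mul (d ^ 11).val).mod 43 = d.val := mod_eq_val (by simpa using hsquare)
  simp only [isExcludedAbove, withNumeral_eq, hc₆, ha₂, hb, hc, hdisc, hroot, hsq, Nat.beq_refl,
    Bool.not_true, Bool.false_or, Bool.and_eq_true] at h
  rcases hlin with ha₁ | ha₁
  · have hval : ((b.val.mul 7).add (d ^ 11).val).mod 43 = a₁.val := mod_eq_val (by simp [ha₁])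
    exact eq_X_pow_eight_of_isExcluded (hval ▸ h.1) hf
  · have hval : ((b.val.mul 7).add ((d ^ 11).val.mul 42)).mod 43 = a₁.val := mod_eq_val (by
      have h42 : (42 : ZMod 43) = -1 := by decide
      simp [ha₁, h42, sub_eq_add_neg])
    exact eq_X_pow_eight_of_isExcluded (hval ▸ h.2) hf

theorem isExcludedRow_zero : ∀ a₅ < 22, isExcludedRow 0 a₅ = true := by
  decide +kernel

theorem isExcludedRow_one : ∀ a₅ < 22, isExcludedRow 1 a₅ = true := by
  decide +kernel

theorem isExcludedRow_neg_one : ∀ a₅ < 22, isExcludedRow 42 a₅ = true := by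
  decide +kernel

theorem eq_X_pow_eight_of_satisfiesHermite (h₆ : a₆ = 0 ∨ a₆ = 1 ∨ a₆ = -1) (h₅ : a₅.val < 22)
    (hf : SatisfiesHermite (octic a₆ a₅ a₄ a₃ a₂ a₁)) : octic a₆ a₅ a₄ a₃ a₂ a₁ = X ^ 8 := by
  have hrow : isExcludedRow a₆.val a₅.val = true := by
    rcases h₆ with rfl | rfl | rfl
    · exact isExcludedRow_zero _ h₅
    · exact isExcludedRow_one _ h₅
    · exact isExcludedRow_neg_one _ h₅
  simp only [isExcludedRow, List.all_eq_true, List.mem_range] at hrow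
  exact eq_X_pow_eight_of_isExcludedAbove (hrow _ a₄.val_lt _ a₃.val_lt) hf

end Elimination

end PermutationOctic

open PermutationOctic

theorem no_pp_deg8_F43 (f : Polynomial (ZMod 43)) (hdeg : f.natDegree = 8) :
    ¬ Function.Bijective (fun a : ZMod 43 => f.eval a) := by
  intro hf
  obtain ⟨a₆, a₅, a₄, a₃, a₂, a₁, h₆, h₅, hbij⟩ := exists_bijective_octic_normalized hdeg hf
  have hoctic : octic a₆ a₅ a₄ a₃ a₂ a₁ = X ^ 8 :=
    eq_X_pow_eight_of_satisfiesHermite h₆ h₅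
      (satisfiesHermite_of_bijective (natDegree_octic_le ..) hbij)
  have hone : (1 : ZMod 43) = -1 := hbij.injective (by norm_num [hoctic])
  exact absurd hone (by decide)
end
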